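/- Let h : ℝⁿ → ℝ be L-smooth and σ-hypoconvex, 0 < γ < 1/[σ]₋. Then the Moreau envelope h^γ(s) := min_w { h(w) + (1/(2γ))‖w-s‖² } is continuously differentiable with ∇h^γ(s) = (1/γ)(s - prox_{γh}(s)), is max{L/(1+γL), [σ]₋/(1+γσ)}-smooth, and is (σ/(1+γσ))-hypoconvex. -/

import Mathlib

open Set Filter

/-!
Taking `w = p s` as a candidate in the minimization of `h w + ‖w - s'‖² / (2γ)` bounds the
envelope at `s'` above by a quadratic in `s'` which touches it at `s` with slope `(s - p s) / γ`.
Moreover `h ↦ h^γ` turns each quadratic lower curvature bound `σ` of `h` into the lower bound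
`σ / (1 + γσ)`, and each upper bound `L` into `L / (1 + γL)`: the value `c / (1 + γc)` is the
minimum over `e` of `c ‖e‖² + ‖e - d‖² / γ` when `‖d‖ = 1`. A convex function lies above the
tangent of any quadratic majorant at a point where they touch, so the two curvature bounds yield
two-sided quadratic estimates with slope `(s - p s) / γ`, hence differentiability and the
Lipschitz constant of the gradient. Upper curvature bounds `L` are expressed as strong concavity
with modulus `-L`.
-/

section Curvature

open scoped InnerProductSpace

variable {E : Type*} [NormedAddCommGroup E] [InnerProductSpace ℝ E]

theorem norm_smul_add_smul_sq {a b : ℝ} (hab : a + b = 1) (x y : E) :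
    ‖a • x + b • y‖ ^ 2 = a * ‖x‖ ^ 2 + b * ‖y‖ ^ 2 - a * b * ‖x - y‖ ^ 2 := by
  obtain rfl := eq_sub_of_add_eq hab
  simp only [norm_add_sq_real, norm_sub_sq_real, norm_smul, mul_pow, Real.norm_eq_abs, sq_abs,
    real_inner_smul_left, real_inner_smul_right]
  ring

theorem half_mul_norm_sq_add_norm_sub_sq {γ c : ℝ} (hγ : γ ≠ 0) (hc : 1 + γ * c ≠ 0) (e d : E) :
    c / 2 * ‖e‖ ^ 2 + 1 / (2 * γ) * ‖e - d‖ ^ 2 =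
      c / (1 + γ * c) / 2 * ‖d‖ ^ 2 + 1 / (2 * γ * (1 + γ * c)) * ‖(1 + γ * c) • e - d‖ ^ 2 := by
  rw [norm_sub_sq_real, norm_sub_sq_real, real_inner_smul_left, norm_smul, mul_pow,
    Real.norm_eq_abs, sq_abs]
  rw [mul_comm γ c] at hc ⊢
  field_simp
  ring

theorem add_inner_add_le_of_strongConvexOn {f : E → ℝ} {m C : ℝ} {x g : E}
    (hf : StrongConvexOn univ m f) (hle : ∀ y, f y ≤ f x + ⟪g, y - x⟫_ℝ + C * ‖y - x‖ ^ 2) (y : E) :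
    f x + ⟪g, y - x⟫_ℝ + m / 2 * ‖y - x‖ ^ 2 ≤ f y := by
  -- `x` lies between `y` and `x - t • (y - x)`, and the majorant bounds `f` at the latter point.
  have extrapolated : ∀ t > 0,
      f x + ⟪g, y - x⟫_ℝ + m / 2 * ‖y - x‖ ^ 2 ≤ f y + t * ((C - m / 2) * ‖y - x‖ ^ 2) := by
    intro t ht
    have ht' : 0 < 1 + t := by positivity
    have hconv := hf.2 (mem_univ (x - t • (y - x))) (mem_univ y)
      (show 0 ≤ 1 / (1 + t) by positivity) (show 0 ≤ t / (1 + t) by positivity) (by field_simp)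
    have hmid : (1 / (1 + t)) • (x - t • (y - x)) + (t / (1 + t)) • y = x := by
      match_scalars <;> field_simp <;> ring
    have hdiff : x - t • (y - x) - y = -((1 + t) • (y - x)) := by module
    have hmaj := hle (x - t • (y - x))
    rw [hmid, hdiff, norm_neg, norm_smul, Real.norm_of_nonneg ht'.le] at hconv
    rw [sub_sub_cancel_left, inner_neg_right, norm_neg, real_inner_smul_right, norm_smul,
      Real.norm_of_nonneg ht.le] at hmaj
    have hconv' : (1 + t) * f x
        ≤ f (x - t • (y - x)) + t * f y - t * (1 + t) * (m / 2 * ‖y - x‖ ^ 2) := by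
      refine (mul_le_mul_of_nonneg_left hconv ht'.le).trans_eq ?_
      simp only [smul_eq_mul]
      field_simp
    refine le_of_mul_le_mul_left ?_ ht
    linarith
  have hlim : Tendsto (fun t : ℝ => f y + t * ((C - m / 2) * ‖y - x‖ ^ 2)) (nhdsWithin 0 (Ioi 0))
      (nhds (f y)) := by
    refine Tendsto.mono_left ?_ nhdsWithin_le_nhds
    exact Continuous.tendsto' (by fun_prop) _ _ (by simp)
  exact ge_of_tendsto hlim (eventually_mem_nhdsWithin.mono extrapolated)

theorem abs_sub_sub_inner_le_of_strongConvexOn_of_strongConcaveOn {f : E → ℝ} {K C : ℝ} {x g : E}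
    (hconv : StrongConvexOn univ (-K) f) (hconc : StrongConcaveOn univ (-K) f)
    (hle : ∀ y, f y ≤ f x + ⟪g, y - x⟫_ℝ + C * ‖y - x‖ ^ 2) (y : E) :
    |f y - f x - ⟪g, y - x⟫_ℝ| ≤ K / 2 * ‖y - x‖ ^ 2 := by
  have hlower := add_inner_add_le_of_strongConvexOn hconv hle
  have hupper := add_inner_add_le_of_strongConvexOn (f := -f) (g := -g) (C := K / 2) hconc.neg
    (x := x) (fun z => by simp only [Pi.neg_apply, inner_neg_left]; linarith [hlower z]) y
  simp only [Pi.neg_apply, inner_neg_left] at hupper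
  exact abs_le.2 ⟨by linarith [hlower y], by linarith⟩

theorem norm_le_mul_norm_of_forall_inner_le {K : ℝ} {u v : E} (hu : u ≠ 0)
    (huv : ∀ q, ⟪v, q⟫_ℝ ≤ K / 2 * (‖q‖ ^ 2 + ‖u‖ ^ 2)) : ‖v‖ ≤ K * ‖u‖ := by
  have hu' : 0 < ‖u‖ := norm_pos_iff.2 hu
  refine le_of_mul_le_mul_right ?_ hu'
  rcases eq_or_ne v 0 with rfl | hv
  · have := huv 0
    simp only [inner_zero_right, norm_zero] at this ⊢
    linarith
  · have hv' : ‖v‖ ≠ 0 := norm_ne_zero_iff.2 hv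
    have hq := huv ((‖u‖ / ‖v‖) • v)
    have hnorm : ‖(‖u‖ / ‖v‖) • v‖ = ‖u‖ := by
      rw [norm_smul, Real.norm_of_nonneg (by positivity), div_mul_cancel₀ _ hv']
    have hinner : ⟪v, (‖u‖ / ‖v‖) • v⟫_ℝ = ‖v‖ * ‖u‖ := by
      rw [real_inner_smul_right, real_inner_self_eq_norm_sq]
      field_simp
    rw [hnorm, hinner] at hq
    linarith

theorem norm_sub_le_of_abs_sub_sub_inner_le {f : E → ℝ} {G : E → E} {K : ℝ}
    (hf : ∀ x y, |f y - f x - ⟪G x, y - x⟫_ℝ| ≤ K / 2 * ‖y - x‖ ^ 2) (x y : E) :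
    ‖G x - G y‖ ≤ K * ‖x - y‖ := by
  rcases eq_or_ne x y with rfl | hxy
  · simp
  refine norm_le_mul_norm_of_forall_inner_le (sub_ne_zero.2 hxy) fun q => ?_
  -- Comparing the estimates from `x` and from `y` at the two points `(x + y ± q) / 2` cancels the
  -- values of `f`.
  set d := x - y with hd
  obtain ⟨plus, hplus⟩ : ∃ z, z = y + (1 / 2 : ℝ) • (d + q) := ⟨_, rfl⟩
  obtain ⟨minus, hminus⟩ : ∃ z, z = y + (1 / 2 : ℝ) • (d - q) := ⟨_, rfl⟩
  have hplus_y : plus - y = (1 / 2 : ℝ) • (d + q) := by rw [hplus]; module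
  have hplus_x : plus - x = -((1 / 2 : ℝ) • (d - q)) := by rw [hplus, hd]; module
  have hminus_y : minus - y = (1 / 2 : ℝ) • (d - q) := by rw [hminus]; module
  have hminus_x : minus - x = -((1 / 2 : ℝ) • (d + q)) := by rw [hminus, hd]; module
  have hf_y_plus := (abs_le.1 (hf y plus)).2
  have hf_x_plus := (abs_le.1 (hf x plus)).1
  have hf_y_minus := (abs_le.1 (hf y minus)).1
  have hf_x_minus := (abs_le.1 (hf x minus)).2
  rw [hplus_y] at hf_y_plus
  rw [hplus_x] at hf_x_plus
  rw [hminus_y] at hf_y_minus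
  rw [hminus_x] at hf_x_minus
  simp only [inner_neg_right, norm_neg, real_inner_smul_right, norm_smul, mul_pow,
    Real.norm_eq_abs, sq_abs, inner_add_right, inner_sub_right]
    at hf_y_plus hf_x_plus hf_y_minus hf_x_minus
  have hpar : K / 8 * (‖d + q‖ ^ 2 + ‖d - q‖ ^ 2) = K / 4 * (‖d‖ ^ 2 + ‖q‖ ^ 2) := by
    linear_combination K / 8 * parallelogram_law_with_norm ℝ d q
  rw [inner_sub_left]
  linarith

theorem strongConcaveOn_of_le_add_inner_add {f : E → ℝ} {G : E → E} {m : ℝ}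
    (hf : ∀ x y, f y ≤ f x + ⟪G x, y - x⟫_ℝ - m / 2 * ‖y - x‖ ^ 2) :
    StrongConcaveOn univ m f := by
  refine ⟨convex_univ, fun x _ y _ a b ha hb hab => ?_⟩
  obtain ⟨z, hz⟩ : ∃ z, z = a • x + b • y := ⟨_, rfl⟩
  obtain rfl := eq_sub_of_add_eq' hab
  have hx : x - z = (1 - a) • (x - y) := by rw [hz]; module
  have hy : y - z = -(a • (x - y)) := by rw [hz]; module
  have hfx := mul_le_mul_of_nonneg_left (hf z x) ha
  have hfy := mul_le_mul_of_nonneg_left (hf z y) hb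
  rw [hx, real_inner_smul_right, norm_smul, mul_pow, Real.norm_eq_abs, sq_abs] at hfx
  rw [hy, inner_neg_right, norm_neg, real_inner_smul_right, norm_smul, mul_pow, Real.norm_eq_abs,
    sq_abs] at hfy
  rw [← hz, smul_eq_mul, smul_eq_mul]
  linarith

variable [CompleteSpace E]

theorem hasGradientAt_of_abs_sub_sub_inner_le {f : E → ℝ} {C : ℝ} {x g : E}
    (hf : ∀ y, |f y - f x - ⟪g, y - x⟫_ℝ| ≤ C * ‖y - x‖ ^ 2) : HasGradientAt f g x := by
  rw [hasGradientAt_iff_isLittleO]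
  refine (Asymptotics.IsBigO.of_bound C (Eventually.of_forall fun y => ?_)).trans_isLittleO
    (Asymptotics.isLittleO_pow_sub_sub x one_lt_two)
  simpa using hf y

theorem contDiff_one_of_hasGradientAt {f : E → ℝ} {G : E → E}
    (hf : ∀ x, HasGradientAt f (G x) x) (hG : Continuous G) : ContDiff ℝ 1 f :=
  contDiff_one_iff_hasFDerivAt.2 ⟨fun x => InnerProductSpace.toDual ℝ E (G x),
    (InnerProductSpace.toDual ℝ E).continuous.comp hG, fun x => (hf x).hasFDerivAt⟩

theorem le_add_inner_add_of_norm_gradient_sub_le {f : E → ℝ} {L : ℝ} (hf : Differentiable ℝ f)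
    (hL : ∀ x y, ‖gradient f x - gradient f y‖ ≤ L * ‖x - y‖) (x y : E) :
    f y ≤ f x + ⟪gradient f x, y - x⟫_ℝ + L / 2 * ‖y - x‖ ^ 2 := by
  set d := y - x with hd
  have hline (t : ℝ) :
      HasDerivAt (fun t : ℝ => f (x + t • d)) ⟪gradient f (x + t • d), d⟫_ℝ t := by
    have hpath : HasDerivAt (fun t : ℝ => x + t • d) d t := by
      simpa using ((hasDerivAt_id t).smul_const d).const_add x
    exact (hf (x + t • d)).hasGradientAt.hasFDerivAt.comp_hasDerivAt t hpath
  have hquad (t : ℝ) :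
      HasDerivAt (fun t : ℝ => f x + t * ⟪gradient f x, d⟫_ℝ + L / 2 * ‖d‖ ^ 2 * t ^ 2)
        (⟪gradient f x, d⟫_ℝ + L * ‖d‖ ^ 2 * t) t := by
    refine ((((hasDerivAt_id t).mul_const ⟪gradient f x, d⟫_ℝ).const_add (f x)).add
      ((hasDerivAt_pow 2 t).const_mul (L / 2 * ‖d‖ ^ 2))).congr_deriv ?_
    simp only [Nat.cast_ofNat, Nat.add_one_sub_one, pow_one, one_mul]
    ring
  have hslope : ∀ t ∈ Ico (0 : ℝ) 1,
      ⟪gradient f (x + t • d), d⟫_ℝ ≤ ⟪gradient f x, d⟫_ℝ + L * ‖d‖ ^ 2 * t := by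
    intro t ht
    rw [← sub_le_iff_le_add', ← inner_sub_left]
    calc ⟪gradient f (x + t • d) - gradient f x, d⟫_ℝ
        ≤ ‖gradient f (x + t • d) - gradient f x‖ * ‖d‖ := real_inner_le_norm _ _
      _ ≤ L * ‖x + t • d - x‖ * ‖d‖ := by gcongr; exact hL _ _
      _ = L * ‖d‖ ^ 2 * t := by
        rw [add_sub_cancel_left, norm_smul, Real.norm_of_nonneg ht.1]
        ring
  have hle := image_le_of_deriv_right_le_deriv_boundary
    (fun t _ => (hline t).continuousAt.continuousWithinAt)
    (fun t _ => (hline t).hasDerivWithinAt) (by simp)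
    (fun t _ => (hquad t).continuousAt.continuousWithinAt)
    (fun t _ => (hquad t).hasDerivWithinAt) hslope (right_mem_Icc.2 zero_le_one)
  simpa [hd] using hle

theorem strongConcaveOn_of_norm_gradient_sub_le {f : E → ℝ} {L : ℝ} (hf : Differentiable ℝ f)
    (hL : ∀ x y, ‖gradient f x - gradient f y‖ ≤ L * ‖x - y‖) :
    StrongConcaveOn univ (-L) f :=
  strongConcaveOn_of_le_add_inner_add (G := gradient f) fun x y => by
    linarith [le_add_inner_add_of_norm_gradient_sub_le hf hL x y]

end Curvature

section MoreauEnvelope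

open scoped InnerProductSpace

variable {E : Type*} [NormedAddCommGroup E]

/-- The Moreau envelope `h^γ`. It is written as an infimum, which is the junk value `0` when
`w ↦ h w + ‖w - s‖² / (2γ)` is unbounded below. -/
noncomputable def moreauEnvelope (γ : ℝ) (h : E → ℝ) (s : E) : ℝ :=
  ⨅ w, h w + 1 / (2 * γ) * ‖w - s‖ ^ 2

/-- `p` is a proximal map `prox_{γh}`: a selection of minimizers in the definition of the Moreau
envelope. -/
def IsProx (γ : ℝ) (h : E → ℝ) (p : E → E) : Prop :=
  ∀ s, IsMinOn (fun w => h w + 1 / (2 * γ) * ‖w - s‖ ^ 2) univ (p s)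

variable {h : E → ℝ} {p : E → E} {L σ γ : ℝ}

theorem IsProx.moreauEnvelope_eq (hp : IsProx γ h p) :
    moreauEnvelope γ h = fun s => h (p s) + 1 / (2 * γ) * ‖p s - s‖ ^ 2 :=
  funext fun s =>
    IsLeast.csInf_eq ⟨mem_range_self (p s), forall_mem_range.2 fun w => hp s (mem_univ w)⟩

theorem IsProx.moreauEnvelope_le (hp : IsProx γ h p) (s w : E) :
    moreauEnvelope γ h s ≤ h w + 1 / (2 * γ) * ‖w - s‖ ^ 2 := by
  rw [hp.moreauEnvelope_eq]
  exact hp s (mem_univ w)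

variable [InnerProductSpace ℝ E]

theorem IsProx.moreauEnvelope_le_add_inner_add (hp : IsProx γ h p) (s s' : E) :
    moreauEnvelope γ h s' ≤ moreauEnvelope γ h s + ⟪(1 / γ) • (s - p s), s' - s⟫_ℝ
      + 1 / (2 * γ) * ‖s' - s‖ ^ 2 := by
  refine (hp.moreauEnvelope_le s' (p s)).trans_eq ?_
  rw [hp.moreauEnvelope_eq, show p s - s' = (p s - s) - (s' - s) by abel, norm_sub_sq_real,
    real_inner_smul_left, ← neg_sub (p s) s, inner_neg_left]
  ring

theorem IsProx.strongConvexOn_moreauEnvelope (hp : IsProx γ h p) (hγ : 0 < γ)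
    (hσ : 0 < 1 + γ * σ) (hh : StrongConvexOn univ σ h) :
    StrongConvexOn univ (σ / (1 + γ * σ)) (moreauEnvelope γ h) := by
  refine ⟨convex_univ, fun s _ s' _ a b ha hb hab => ?_⟩
  have hmin := hp.moreauEnvelope_le (a • s + b • s') (a • p s + b • p s')
  have hconv := hh.2 (mem_univ (p s)) (mem_univ (p s')) ha hb hab
  rw [show a • p s + b • p s' - (a • s + b • s') = a • (p s - s) + b • (p s' - s') by module,
    norm_smul_add_smul_sq hab, show p s - s - (p s' - s') = p s - p s' - (s - s') by abel] at hmin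
  have hmodulus : σ / (1 + γ * σ) / 2 * ‖s - s'‖ ^ 2
      ≤ σ / 2 * ‖p s - p s'‖ ^ 2 + 1 / (2 * γ) * ‖p s - p s' - (s - s')‖ ^ 2 := by
    rw [half_mul_norm_sq_add_norm_sub_sq hγ.ne' hσ.ne']
    exact le_add_of_nonneg_right (by positivity)
  have hscaled := mul_le_mul_of_nonneg_left hmodulus (mul_nonneg ha hb)
  simp only [hp.moreauEnvelope_eq, smul_eq_mul] at hmin hconv ⊢
  linarith

theorem IsProx.strongConcaveOn_moreauEnvelope (hp : IsProx γ h p) (hγ : 0 < γ)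
    (hL : 0 < 1 + γ * L) (hh : StrongConcaveOn univ (-L) h) :
    StrongConcaveOn univ (-(L / (1 + γ * L))) (moreauEnvelope γ h) := by
  refine ⟨convex_univ, fun s _ s' _ a b ha hb hab => ?_⟩
  obtain ⟨w, hw⟩ : ∃ w, w = p (a • s + b • s') := ⟨_, rfl⟩
  obtain ⟨e, he⟩ : ∃ e, e = (1 + γ * L)⁻¹ • (s - s') := ⟨_, rfl⟩
  -- `u` and `v` are candidates for `s` and `s'` averaging to `w`; their difference `e` minimizes
  -- `L * ‖e‖ ^ 2 + ‖e - (s - s')‖ ^ 2 / γ`.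
  obtain ⟨u, v, havg, hdiff⟩ : ∃ u v, a • u + b • v = w ∧ u - v = e := by
    obtain rfl := eq_sub_of_add_eq hab
    exact ⟨w + b • e, w - (1 - b) • e, by module, by module⟩
  have hs := mul_le_mul_of_nonneg_left (hp.moreauEnvelope_le s u) ha
  have hs' := mul_le_mul_of_nonneg_left (hp.moreauEnvelope_le s' v) hb
  have hconc := hh.2 (mem_univ u) (mem_univ v) ha hb hab
  have hdist : ‖w - (a • s + b • s')‖ ^ 2
      = a * ‖u - s‖ ^ 2 + b * ‖v - s'‖ ^ 2 - a * b * ‖e - (s - s')‖ ^ 2 := by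
    rw [show e - (s - s') = u - s - (v - s') by rw [← hdiff]; abel,
      ← norm_smul_add_smul_sq hab, ← havg]
    congr 2
    module
  have hmodulus : L / 2 * ‖e‖ ^ 2 + 1 / (2 * γ) * ‖e - (s - s')‖ ^ 2
      = L / (1 + γ * L) / 2 * ‖s - s'‖ ^ 2 := by
    rw [half_mul_norm_sq_add_norm_sub_sq hγ.ne' hL.ne', he, smul_inv_smul₀ hL.ne']
    simp
  have hscaled := congrArg (a * b * ·) hmodulus
  simp only [havg, hdiff, smul_eq_mul] at hconc hscaled ⊢
  rw [congrFun hp.moreauEnvelope_eq (a • s + b • s'), ← hw, hdist]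
  linarith

variable [CompleteSpace E]

theorem moreau_envelope_smooth_general (hp : IsProx γ h p) (hγ : 0 < γ) (hσ : 0 < 1 + γ * σ)
    (hL : 0 ≤ L) (hh : Differentiable ℝ h)
    (hLip : ∀ x y, ‖gradient h x - gradient h y‖ ≤ L * ‖x - y‖) (hhyp : StrongConvexOn univ σ h) :
    ContDiff ℝ 1 (moreauEnvelope γ h) ∧
    (∀ s, HasGradientAt (moreauEnvelope γ h) ((1 / γ) • (s - p s)) s) ∧
    (∀ s s', ‖gradient (moreauEnvelope γ h) s - gradient (moreauEnvelope γ h) s'‖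
      ≤ max (L / (1 + γ * L)) (max 0 (-σ) / (1 + γ * σ)) * ‖s - s'‖) ∧
    StrongConvexOn univ (σ / (1 + γ * σ)) (moreauEnvelope γ h) := by
  set K := max (L / (1 + γ * L)) (max 0 (-σ) / (1 + γ * σ))
  have hKL : L / (1 + γ * L) ≤ K := le_max_left _ _
  have hKσ : -K ≤ σ / (1 + γ * σ) := by
    rw [neg_le, ← neg_div]
    exact le_max_of_le_right (by gcongr; exact le_max_right _ _)
  have hconv := hp.strongConvexOn_moreauEnvelope hγ hσ hhyp
  have hconc := hp.strongConcaveOn_moreauEnvelope hγ (by positivity)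
    (strongConcaveOn_of_norm_gradient_sub_le hh hLip)
  have hquad (s s' : E) := abs_sub_sub_inner_le_of_strongConvexOn_of_strongConcaveOn
    (hconv.mono hKσ) (hconc.mono (neg_le_neg hKL)) (hp.moreauEnvelope_le_add_inner_add s) s'
  have hgrad (s : E) := hasGradientAt_of_abs_sub_sub_inner_le (hquad s)
  have hgradLip := norm_sub_le_of_abs_sub_sub_inner_le hquad
  refine ⟨contDiff_one_of_hasGradientAt hgrad ?_, hgrad, ?_, hconv⟩
  · exact (LipschitzWith.of_dist_le' fun s s' => by
      simpa only [dist_eq_norm] using hgradLip s s').continuous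
  · simpa only [gradient_eq hgrad] using hgradLip

end MoreauEnvelope

/-- For `h` `L`-smooth and `σ`-hypoconvex and `0 < γ < 1/[σ]₋`, the Moreau
envelope `h^γ` is continuously differentiable with `∇h^γ(s) = (1/γ)(s - prox_{γh}(s))`, is
`max{L/(1+γL), [σ]₋/(1+γσ)}`-smooth, and is `(σ/(1+γσ))`-hypoconvex. -/
theorem moreau_envelope_smooth {n : ℕ}
    (h : EuclideanSpace ℝ (Fin n) → ℝ) (L σ γ : ℝ) (hσ : σ ∈ Set.Icc (-L) L)
    (hC1 : ContDiff ℝ 1 h)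
    (hLip : ∀ x y, ‖gradient h x - gradient h y‖ ≤ L * ‖x - y‖)
    (hhyp : ConvexOn ℝ Set.univ (fun x => h x - σ / 2 * ‖x‖ ^ 2))
    (hγ0 : 0 < γ) (hγ : γ * max 0 (-σ) < 1)
    (p : EuclideanSpace ℝ (Fin n) → EuclideanSpace ℝ (Fin n))
    (hp : ∀ s, IsMinOn (fun w => h w + 1 / (2 * γ) * ‖w - s‖ ^ 2) Set.univ (p s)) :
    ContDiff ℝ 1 (fun s => h (p s) + 1 / (2 * γ) * ‖p s - s‖ ^ 2) ∧
    (∀ s, HasGradientAt (fun s => h (p s) + 1 / (2 * γ) * ‖p s - s‖ ^ 2)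
      ((1 / γ) • (s - p s)) s) ∧
    (∀ s s', ‖gradient (fun s => h (p s) + 1 / (2 * γ) * ‖p s - s‖ ^ 2) s
        - gradient (fun s => h (p s) + 1 / (2 * γ) * ‖p s - s‖ ^ 2) s'‖
      ≤ max (L / (1 + γ * L)) (max 0 (-σ) / (1 + γ * σ)) * ‖s - s'‖) ∧
    ConvexOn ℝ Set.univ (fun s =>
      (h (p s) + 1 / (2 * γ) * ‖p s - s‖ ^ 2) - (σ / (1 + γ * σ)) / 2 * ‖s‖ ^ 2) := by
  have hσ' : 0 < 1 + γ * σ := by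
    linarith [mul_le_mul_of_nonneg_left (le_max_right 0 (-σ)) hγ0.le]
  simpa only [IsProx.moreauEnvelope_eq hp, strongConvexOn_iff_convex] using
    moreau_envelope_smooth_general hp hγ0 hσ' (by linarith [hσ.1, hσ.2])
      (hC1.differentiable one_ne_zero) hLip (strongConvexOn_iff_convex.2 hhyp)
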